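/- Let ν be a lattice path with m east and n north steps and ℓ = m+n. If b = (b₁,…,b_{ℓ+1}) and b' = (b'₁,…,b'_{ℓ+1}) are ν-bracket vectors, then their componentwise minimum (min{b₁,b'₁},…,min{b_{ℓ+1},b'_{ℓ+1}}) is again a ν-bracket vector, and it is the greatest lower bound (meet) of b and b' in the componentwise order on ν-bracket vectors. -/

import Mathlib

open scoped Classical

/-! Lattice paths: `true` = north step, `false` = east step. -/

def eastSteps (ν : List Bool) : ℕ := ν.count false
def northSteps (ν : List Bool) : ℕ := ν.count true

/-- Height at which the path first reaches abscissa `x`. -/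
def heightAt : List Bool → ℕ → ℕ
  | _, 0 => 0
  | [], _ + 1 => 0
  | true :: rest, x + 1 => heightAt rest (x + 1) + 1
  | false :: rest, x + 1 => heightAt rest x

/-- Lattice point of a path after `i` steps. -/
def pointAt (μ : List Bool) (i : ℕ) : ℕ × ℕ :=
  ((μ.take i).count false, (μ.take i).count true)

/-- The set `A_ν` of lattice points weakly above `ν`. -/
def APts (ν : List Bool) : Set (ℕ × ℕ) :=
  {p | p.1 ≤ eastSteps ν ∧ heightAt ν p.1 ≤ p.2 ∧ p.2 ≤ northSteps ν}

def Incompatible (ν : List Bool) (p q : ℕ × ℕ) : Prop :=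
  (p.1 < q.1 ∧ p.2 < q.2 ∧ (q.1, p.2) ∈ APts ν) ∨
    (q.1 < p.1 ∧ q.2 < p.2 ∧ (p.1, q.2) ∈ APts ν)

def Compatible (ν : List Bool) (p q : ℕ × ℕ) : Prop := ¬ Incompatible ν p q

def IsNuTree (ν : List Bool) (T : Set (ℕ × ℕ)) : Prop :=
  T ⊆ APts ν ∧ T.Pairwise (Compatible ν) ∧
    ∀ T', T' ⊆ APts ν → T'.Pairwise (Compatible ν) → T ⊆ T' → T' = T

def IsRightRotationAt (T T' : Set (ℕ × ℕ)) (q q' : ℕ × ℕ) : Prop :=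
  ∃ x y x'' y', q = (x, y) ∧ q' = (x'', y') ∧ x < x'' ∧ y < y' ∧
    (x, y) ∈ T ∧ (x, y') ∈ T ∧ (x'', y) ∈ T ∧
    (∀ b, y < b → b < y' → (x, b) ∉ T) ∧
    (∀ a, x < a → a < x'' → (a, y) ∉ T) ∧
    (∀ a, x < a → a < x'' → (a, y') ∉ T) ∧
    (∀ b, y < b → b < y' → (x'', b) ∉ T) ∧
    T' = (T \ {(x, y)}) ∪ {(x'', y')}

def IsRightRotation (T T' : Set (ℕ × ℕ)) : Prop :=
  ∃ q q', IsRightRotationAt T T' q q'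

/-- Order relation of the rotation poset of ν-trees. -/
def TreeLE (ν : List Bool) : Set (ℕ × ℕ) → Set (ℕ × ℕ) → Prop :=
  Relation.ReflTransGen fun A B => IsNuTree ν A ∧ IsNuTree ν B ∧ IsRightRotation A B

def IsNuPath (ν μ : List Bool) : Prop :=
  eastSteps μ = eastSteps ν ∧ northSteps μ = northSteps ν ∧
    ∀ i ≤ μ.length, pointAt μ i ∈ APts ν

noncomputable def horiz (ν : List Bool) (p : ℕ × ℕ) : ℕ :=
  sSup {k | (p.1 + k, p.2) ∈ APts ν}

/-- Covering relation of the ν-Tamari lattice. -/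
def TamariCover (ν μ μ' : List Bool) : Prop :=
  IsNuPath ν μ ∧ IsNuPath ν μ' ∧
    ∃ i j, 0 < i ∧ i < j ∧ j ≤ μ.length ∧
      μ.getD (i - 1) true = false ∧ μ.getD i false = true ∧
      horiz ν (pointAt μ j) = horiz ν (pointAt μ i) ∧
      (∀ k, i < k → k < j → horiz ν (pointAt μ k) ≠ horiz ν (pointAt μ i)) ∧
      μ' = μ.take (i - 1) ++ (μ.drop i).take (j - i) ++ [false] ++ μ.drop j

def TamariLE (ν : List Bool) : List Bool → List Bool → Prop :=
  Relation.ReflTransGen (TamariCover ν)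

/-! Flushing maps -/

def rowAvail (ν : List Bool) (y : ℕ) : List ℕ :=
  ((List.range (eastSteps ν + 1)).filter fun x => decide (heightAt ν x ≤ y)).reverse

def pointsAtHeight (μ : List Bool) (y : ℕ) : ℕ :=
  ((List.range (μ.length + 1)).filter fun i => decide ((μ.take i).count true = y)).length

def rflushAux (ν : List Bool) : List ℕ → ℕ → List ℕ → List (ℕ × ℕ)
  | [], _, _ => []
  | c :: rest, y, forbidden =>
    let placed := ((rowAvail ν y).filter fun x => decide (x ∉ forbidden)).take c
    placed.map (fun x => (x, y)) ++ rflushAux ν rest (y + 1) (forbidden ++ placed.dropLast)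

/-- Right-flushing map `R`. -/
def Rflush (ν μ : List Bool) : Set (ℕ × ℕ) :=
  {p | p ∈ rflushAux ν ((List.range (northSteps ν + 1)).map (pointsAtHeight μ)) 0 []}

def lflushAux (m : ℕ) : List ℕ → ℕ → List ℕ → List (ℕ × ℕ)
  | [], _, _ => []
  | c :: rest, y, forbidden =>
    let placed := ((List.range (m + 1)).filter fun x => decide (x ∉ forbidden)).take c
    placed.map (fun x => (x, y)) ++ lflushAux m rest (y + 1) (forbidden ++ placed.dropLast)

noncomputable def rowCount (T : Set (ℕ × ℕ)) (y : ℕ) : ℕ := {x | (x, y) ∈ T}.ncard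

/-- Left-flushing map `L`. -/
noncomputable def Lflush (ν : List Bool) (T : Set (ℕ × ℕ)) : Set (ℕ × ℕ) :=
  {p | p ∈ lflushAux (eastSteps ν) ((List.range (northSteps ν + 1)).map (rowCount T)) 0 []}

def pathPointSet (μ : List Bool) : Set (ℕ × ℕ) := {p | ∃ i ≤ μ.length, pointAt μ i = p}

/-! Bracket vectors (0-indexed positions `0,…,ℓ`). -/

noncomputable def fpos (ν : List Bool) (k : ℕ) : ℕ :=
  sSup {i | i ≤ ν.length ∧ (ν.take i).count true = k}

def bmin (ν : List Bool) : List ℕ :=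
  (List.range (ν.length + 1)).map fun i => (ν.take i).count true

def IsBracketVector (ν : List Bool) (b : List ℕ) : Prop :=
  b.length = ν.length + 1 ∧
    (∀ k ≤ northSteps ν, b.getD (fpos ν k) 0 = k) ∧
    (∀ i < b.length, (bmin ν).getD i 0 ≤ b.getD i 0 ∧ b.getD i 0 ≤ northSteps ν) ∧
    ∀ i j k, i < j → j < k → k < b.length →
      ¬(b.getD i 0 = b.getD k 0 ∧ b.getD i 0 < b.getD j 0)

noncomputable def leftChild (T : Set (ℕ × ℕ)) (p : ℕ × ℕ) : Option (ℕ × ℕ) :=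
  if ∃ b, (p.1, b) ∈ T ∧ b < p.2 then some (p.1, sSup {b | (p.1, b) ∈ T ∧ b < p.2})
  else none

noncomputable def rightChild (T : Set (ℕ × ℕ)) (p : ℕ × ℕ) : Option (ℕ × ℕ) :=
  if ∃ a, (a, p.2) ∈ T ∧ p.1 < a then
    if ∃ b, (sInf {a | (a, p.2) ∈ T ∧ p.1 < a}, b) ∈ T ∧ p.2 < b then none
    else some (sInf {a | (a, p.2) ∈ T ∧ p.1 < a}, p.2)
  else none

noncomputable def inorderAux (T : Set (ℕ × ℕ)) : ℕ → ℕ × ℕ → List (ℕ × ℕ)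
  | 0, _ => []
  | fuel + 1, p =>
    (match leftChild T p with
      | none => []
      | some l => inorderAux T fuel l) ++ p ::
      (match rightChild T p with
        | none => []
        | some r => inorderAux T fuel r)

/-- Bracket vector of a ν-tree: y-coordinates read in in-order from the root `(0,n)`. -/
noncomputable def bracketOfTree (ν : List Bool) (T : Set (ℕ × ℕ)) : List ℕ :=
  (inorderAux T T.ncard (0, northSteps ν)).map Prod.snd

noncomputable def bracketAssign (ν μ : List Bool) : List (ℕ × ℕ) :=
  ((List.range (northSteps ν + 1)).foldl
    (fun (st : List (ℕ × ℕ) × List ℕ) k =>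
      let picked := ((st.2.filter fun i => decide (i ≤ fpos ν k)).reverse).take
        (pointsAtHeight μ k)
      (st.1 ++ picked.map fun i => (i, k), st.2.filter fun i => decide (i ∉ picked)))
    ([], List.range (ν.length + 1))).1

/-- Bracket vector of a ν-path. -/
noncomputable def bracketOfPath (ν μ : List Bool) : List ℕ :=
  (List.range (ν.length + 1)).map fun i => ((bracketAssign ν μ).lookup i).getD 0

/-- Componentwise order on (equal length) integer vectors. -/
def listLE (b b' : List ℕ) : Prop :=
  b.length = b'.length ∧ ∀ i, b.getD i 0 ≤ b'.getD i 0

/-! Reversal -/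

def revPath (ν : List Bool) : List Bool := ν.reverse.map fun s => !s

def revTree (ν : List Bool) (T : Set (ℕ × ℕ)) : Set (ℕ × ℕ) :=
  (fun p : ℕ × ℕ => (northSteps ν - p.2, eastSteps ν - p.1)) '' T

/-! Pipe dreams and subword complexes -/

def dOf (ν : List Bool) (p : ℕ × ℕ) : ℕ := p.1 + (northSteps ν - p.2)

def labelPerm (ν : List Bool) (p : ℕ × ℕ) : Equiv.Perm ℕ :=
  Equiv.swap (dOf ν p + 1) (dOf ν p + 2)

/-- The points of `A_ν` in reading order: rows from bottom to top, each left to right. -/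
def readingList (ν : List Bool) : List (ℕ × ℕ) :=
  ((List.range (northSteps ν + 1)).map fun y =>
    ((List.range (eastSteps ν + 1)).filter fun x => decide (heightAt ν x ≤ y)).map
      fun x => (x, y)).flatten

/-- The minimal ν-tree. -/
def TminSet (ν : List Bool) : Set (ℕ × ℕ) :=
  {p | p ∈ APts ν ∧ (p.1 = 0 ∨ ∃ i < ν.length, ν.getD i true = false ∧ p = pointAt ν (i + 1))}

noncomputable def prodOver (ν : List Bool) (C : Set (ℕ × ℕ)) : Equiv.Perm ℕ :=
  (((readingList ν).filter fun p => decide (p ∈ C)).map (labelPerm ν)).prod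

/-- Coxeter length: number of inversions. -/
noncomputable def lenInv (π : Equiv.Perm ℕ) : ℕ :=
  {q : ℕ × ℕ | q.1 < q.2 ∧ π q.2 < π q.1}.ncard

noncomputable def piNu (ν : List Bool) : Equiv.Perm ℕ := prodOver ν (APts ν \ TminSet ν)

def Qword (ν : List Bool) : List (Equiv.Perm ℕ) := (readingList ν).map (labelPerm ν)

noncomputable def prodAt (Q : List (Equiv.Perm ℕ)) (P : Finset ℕ) : Equiv.Perm ℕ :=
  (((List.range Q.length).filter fun i => decide (i ∈ P)).map fun i => Q.getD i 1).prod

def IsFacet (Q : List (Equiv.Perm ℕ)) (π : Equiv.Perm ℕ) (I : Finset ℕ) : Prop :=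
  I ⊆ Finset.range Q.length ∧
    prodAt Q (Finset.range Q.length \ I) = π ∧
    (Finset.range Q.length \ I).card = lenInv π

def IncFlip (Q : List (Equiv.Perm ℕ)) (π : Equiv.Perm ℕ) (I J : Finset ℕ) : Prop :=
  IsFacet Q π I ∧ IsFacet Q π J ∧ ∃ i ∈ I, ∃ j ∈ J, i < j ∧ I.erase i = J.erase j

def FlipLE (Q : List (Equiv.Perm ℕ)) (π : Equiv.Perm ℕ) : Finset ℕ → Finset ℕ → Prop :=
  Relation.ReflTransGen (IncFlip Q π)

/-- The maximal ν-tree. -/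
def TmaxSet (ν : List Bool) : Set (ℕ × ℕ) :=
  {p | (p.1 ≤ eastSteps ν ∧ p.2 = northSteps ν) ∨ ∃ i < ν.length, ν.getD i false = true ∧ p = pointAt ν i}

/-!
For `v ≤ northSteps ν`, every position at which the minimal bracket vector is at most `v` is at most
`fpos ν v`, because the path climbs one unit at a time. Since a bracket vector `b` takes the value
`v` at `fpos ν v`, avoiding 121 therefore amounts to saying that no entry of `b` between `i` and
`fpos ν (b i)` exceeds `b i`. This condition survives minima: if the minimum at `i` is attained by
`b`, then at every later position up to `fpos ν (b i)` the minimum is at most the entry of `b`,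
hence at most `b i`.
-/

theorem getD_zipWith {α β γ : Type*} (f : α → β → γ) {l : List α} {l' : List β}
    (h : l.length = l'.length) (i : ℕ) (a : α) (b : β) :
    (List.zipWith f l l').getD i (f a b) = f (l.getD i a) (l'.getD i b) := by
  rcases lt_or_ge i l.length with hi | hi
  · have hi' : i < l'.length := h ▸ hi
    simp [List.getD_eq_getElem?_getD, hi, hi']
  · have hi' : l'.length ≤ i := h ▸ hi
    simp [List.getD_eq_getElem?_getD, hi, hi']

theorem count_take_succ_le {α : Type*} [BEq α] (a : α) (l : List α) (i : ℕ) :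
    (l.take (i + 1)).count a ≤ (l.take i).count a + 1 := by
  rw [List.take_add_one, List.count_append]
  exact Nat.add_le_add_left (List.count_le_length.trans Option.length_toList_le) _

theorem exists_eq_of_le_add_one {α : Type*} [LinearOrder α] [Add α] [One α] [SuccAddOrder α]
    {f : ℕ → α} (hf : ∀ i, f (i + 1) ≤ f i + 1) {a b : ℕ} {v : α}
    (hab : a ≤ b) (ha : f a ≤ v) (hb : v ≤ f b) : ∃ i, a ≤ i ∧ i ≤ b ∧ f i = v := by
  induction b, hab using Nat.le_induction with
  | base => exact ⟨a, le_rfl, le_rfl, ha.antisymm hb⟩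
  | succ b hab ih =>
    rcases hb.eq_or_lt with hv | hv
    · exact ⟨b + 1, hab.trans b.le_succ, le_rfl, hv.symm⟩
    · obtain ⟨i, hai, hib, hi⟩ := ih (Order.le_of_lt_add_one (hv.trans_le (hf b)))
      exact ⟨i, hai, hib.trans b.le_succ, hi⟩

theorem bmin_getD {ν : List Bool} {i : ℕ} (hi : i ≤ ν.length) :
    (bmin ν).getD i 0 = (ν.take i).count true := by
  simp [bmin, List.getD_eq_getElem?_getD, Nat.lt_succ_of_le hi]

theorem fpos_le_length (ν : List Bool) (v : ℕ) : fpos ν v ≤ ν.length :=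
  csSup_le' fun _ hi => hi.1

theorem le_fpos {ν : List Bool} {k v : ℕ} (hk : k ≤ ν.length) (hkv : (bmin ν).getD k 0 ≤ v)
    (hv : v ≤ northSteps ν) : k ≤ fpos ν v := by
  rw [bmin_getD hk] at hkv
  have hv_end : v ≤ (ν.take ν.length).count true := by rwa [List.take_length]
  obtain ⟨p, hkp, hp, hpv⟩ :=
    exists_eq_of_le_add_one (f := fun i => (ν.take i).count true)
      (count_take_succ_le true ν) hk hkv hv_end
  exact hkp.trans (le_csSup ⟨ν.length, fun _ hi => hi.1⟩ ⟨hp, hpv⟩)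

theorem isBracketVector_iff_getD_le {ν : List Bool} {b : List ℕ} :
    IsBracketVector ν b ↔
      b.length = ν.length + 1 ∧
      (∀ k ≤ northSteps ν, b.getD (fpos ν k) 0 = k) ∧
      (∀ i < b.length, (bmin ν).getD i 0 ≤ b.getD i 0 ∧ b.getD i 0 ≤ northSteps ν) ∧
      ∀ i j, i < j → j ≤ fpos ν (b.getD i 0) → b.getD j 0 ≤ b.getD i 0 := by
  refine and_congr_right fun hlen => and_congr_right fun hfix => and_congr_right fun hbd => ?_
  constructor
  · intro havoid i j hij hj
    have hlast := fpos_le_length ν (b.getD i 0)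
    have hlast_val := hfix _ (hbd i (by omega)).2
    rcases hj.eq_or_lt with rfl | hj
    · exact hlast_val.le
    · by_contra! hlt
      exact havoid i j _ hij hj (by omega) ⟨hlast_val.symm, hlt⟩
  · rintro hle i j k hij hjk hk ⟨hik, hlt⟩
    have hk_last : k ≤ fpos ν (b.getD k 0) := le_fpos (by omega) (hbd k hk).1 (hbd k hk).2
    exact hlt.not_ge (hle i j hij (hjk.le.trans (hik ▸ hk_last)))

theorem IsBracketVector.zipWith_min {ν : List Bool} {b b' : List ℕ}
    (hb : IsBracketVector ν b) (hb' : IsBracketVector ν b') :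
    IsBracketVector ν (List.zipWith min b b') := by
  rw [isBracketVector_iff_getD_le] at hb hb' ⊢
  obtain ⟨hlen, hfix, hbd, hle⟩ := hb
  obtain ⟨hlen', hfix', hbd', hle'⟩ := hb'
  have hmin (i : ℕ) : (List.zipWith min b b').getD i 0 = min (b.getD i 0) (b'.getD i 0) :=
    getD_zipWith min (hlen.trans hlen'.symm) i 0 0
  have hlen_min : (List.zipWith min b b').length = ν.length + 1 := by simp [hlen, hlen']
  simp only [hmin, hlen_min]
  rw [hlen] at hbd
  rw [hlen'] at hbd'
  refine ⟨trivial, fun k hk => ?_, fun i hi => ?_, fun i j hij hj => ?_⟩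
  · rw [hfix k hk, hfix' k hk, min_self]
  · exact ⟨le_min (hbd i hi).1 (hbd' i hi).1, min_le_of_left_le (hbd i hi).2⟩
  · rcases min_choice (b.getD i 0) (b'.getD i 0) with hi | hi <;> rw [hi] at hj ⊢
    · exact min_le_of_left_le (hle i j hij hj)
    · exact min_le_of_right_le (hle' i j hij hj)

theorem listLE_zipWith_min_iff {b b' c : List ℕ} (h : b.length = b'.length) :
    listLE c (List.zipWith min b b') ↔ listLE c b ∧ listLE c b' := by
  have hmin (i : ℕ) : (List.zipWith min b b').getD i 0 = min (b.getD i 0) (b'.getD i 0) :=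
    getD_zipWith min h i 0 0
  simp only [listLE, hmin, le_min_iff, forall_and, List.length_zipWith, ← h, min_self]
  tauto

theorem bracket_meet_componentwise_min (ν : List Bool) (b b' : List ℕ)
    (hb : IsBracketVector ν b) (hb' : IsBracketVector ν b') :
    IsBracketVector ν (List.zipWith min b b') ∧
    listLE (List.zipWith min b b') b ∧ listLE (List.zipWith min b b') b' ∧
    ∀ c, IsBracketVector ν c → listLE c b → listLE c b' →
      listLE c (List.zipWith min b b') := by
  have hlen : b.length = b'.length := hb.1.trans hb'.1.symm
  have hlower := (listLE_zipWith_min_iff hlen).1 ⟨rfl, fun _ => le_rfl⟩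
  exact ⟨hb.zipWith_min hb', hlower.1, hlower.2,
    fun c _ hcb hcb' => (listLE_zipWith_min_iff hlen).2 ⟨hcb, hcb'⟩⟩
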